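/- Let τ ≥ 1/2 + 1/√2 and let A₀,A₁,B₀,B₁ be arbitrary POVM elements on ℂ². Then the two-qubit maximally entangled state |ψ^{π/4}⟩ = (e₀⊗e₀ + e₁⊗e₁)/√2 does not violate the tilted-CH inequality: S^(τ)(ρ_{π/4}; A₀,A₁,B₀,B₁) ≤ 0. -/

import Mathlib

open Matrix
open scoped Kronecker ComplexOrder

/-- `A` is a POVM element on `ℂ^d`: both `A` and `1 - A` are positive semidefinite. -/
def IsPOVMElem {d : ℕ} (A : Matrix (Fin d) (Fin d) ℂ) : Prop :=
  A.PosSemidef ∧ (1 - A).PosSemidef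

/-- `ρ` is a density matrix: positive semidefinite with unit trace. -/
def IsDensityMatrix {n : Type*} [Fintype n] [DecidableEq n]
    (ρ : Matrix n n ℂ) : Prop :=
  ρ.PosSemidef ∧ ρ.trace = 1

/-- The tilted-CH Bell value `S^(τ)(ρ; A₀,A₁,B₀,B₁)`. -/
noncomputable def tiltedCHBell {d : ℕ} (τ : ℝ)
    (ρ : Matrix (Fin d × Fin d) (Fin d × Fin d) ℂ)
    (A0 A1 B0 B1 : Matrix (Fin d) (Fin d) ℂ) : ℝ :=
  (Matrix.trace (ρ * (A0 ⊗ₖ B0 + A0 ⊗ₖ B1 + A1 ⊗ₖ B0 - A1 ⊗ₖ B1))).re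
    - τ * (Matrix.trace (ρ * (A0 ⊗ₖ (1 : Matrix (Fin d) (Fin d) ℂ)))).re
    - τ * (Matrix.trace (ρ * ((1 : Matrix (Fin d) (Fin d) ℂ) ⊗ₖ B0))).re

/-- The `d`-dimensional maximally entangled state `|Ψ⁺_d⟩` as a vector. -/
noncomputable def maxEntVec (d : ℕ) : Fin d × Fin d → ℂ :=
  fun jk => if jk.1 = jk.2 then (1 / Real.sqrt d : ℂ) else 0

/-- The density matrix `ρ_d⁺ = |Ψ⁺_d⟩⟨Ψ⁺_d|`. -/
noncomputable def maxEntState (d : ℕ) :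
    Matrix (Fin d × Fin d) (Fin d × Fin d) ℂ :=
  Matrix.vecMulVec (maxEntVec d) (fun jk => starRingEnd ℂ (maxEntVec d jk))

/-- The two-qubit pure state `|ψ^γ⟩ = cos γ |00⟩ + sin γ |11⟩` as a vector. -/
noncomputable def schmidtVec (γ : ℝ) : Fin 2 × Fin 2 → ℂ :=
  fun jk =>
    if jk = (0, 0) then (Real.cos γ : ℂ)
    else if jk = (1, 1) then (Real.sin γ : ℂ) else 0

/-- The density matrix `ρ_γ = |ψ^γ⟩⟨ψ^γ|`. -/
noncomputable def schmidtState (γ : ℝ) :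
    Matrix (Fin 2 × Fin 2) (Fin 2 × Fin 2) ℂ :=
  Matrix.vecMulVec (schmidtVec γ) (fun jk => starRingEnd ℂ (schmidtVec γ jk))

/-- Bloch-coordinates of a POVM element. -/
def BlochOK (x0 x1 x2 x3 : ℝ) : Prop :=
  0 ≤ x0 ∧ x0 ≤ 1 ∧ x1 ^ 2 + x2 ^ 2 + x3 ^ 2 ≤ x0 ^ 2 ∧ x1 ^ 2 + x2 ^ 2 + x3 ^ 2 ≤ (1 - x0) ^ 2

lemma bloch_ext (k p0 p1 p2 p3 x0 x1 x2 x3 : ℝ) (hx : BlochOK x0 x1 x2 x3)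
    (h0 : k ≤ 0) (h1 : k + p0 ≤ 0)
    (hu : ∀ u1 u2 u3 : ℝ, u1 ^ 2 + u2 ^ 2 + u3 ^ 2 = 1 / 4 →
      k + p0 / 2 + (p1 * u1 + p2 * u2 + p3 * u3) ≤ 0) :
    k + p0 * x0 + (p1 * x1 + p2 * x2 + p3 * x3) ≤ 0 := by
  obtain ⟨a, b, c, d⟩ := hx
  set r := Real.sqrt (x1 ^ 2 + x2 ^ 2 + x3 ^ 2) with hr
  have hr0 : 0 ≤ r := Real.sqrt_nonneg _
  have hr2 : r ^ 2 = x1 ^ 2 + x2 ^ 2 + x3 ^ 2 := Real.sq_sqrt (by positivity)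
  have hra : r ≤ x0 := Real.sqrt_le_iff.2 ⟨a, c⟩
  have hrb : r ≤ 1 - x0 := Real.sqrt_le_iff.2 ⟨by linarith, d⟩
  rcases hr0.eq_or_lt with h | h
  · rw [← h] at hr2
    have e1 : x1 = 0 := by nlinarith [sq_nonneg x1, sq_nonneg x2, sq_nonneg x3]
    have e2 : x2 = 0 := by nlinarith [sq_nonneg x1, sq_nonneg x2, sq_nonneg x3]
    have e3 : x3 = 0 := by nlinarith [sq_nonneg x1, sq_nonneg x2, sq_nonneg x3]
    subst e1 e2 e3
    nlinarith
  · have := hu (x1 / (2 * r)) (x2 / (2 * r)) (x3 / (2 * r)) (by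
      field_simp
      linarith)
    have e : k + p0 * x0 + (p1 * x1 + p2 * x2 + p3 * x3) =
      (1 - x0 - r) * k + (x0 - r) * (k + p0) + 2 * r * (k + p0 / 2 +
        (p1 * (x1 / (2 * r)) + p2 * (x2 / (2 * r)) + p3 * (x3 / (2 * r)))) := by
      field_simp
      ring
    rw [e]
    nlinarith [mul_nonneg (sub_nonneg.2 hrb) (neg_nonneg.2 h0),
      mul_nonneg (sub_nonneg.2 hra) (neg_nonneg.2 h1), mul_nonneg hr0 (neg_nonneg.2 this)]

lemma bloch_pos (x0 x1 x2 x3 y0 y1 y2 y3 : ℝ) (hx : BlochOK x0 x1 x2 x3)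
    (hy : BlochOK y0 y1 y2 y3) : 0 ≤ x0 * y0 + (x1 * y1 + x2 * y2 + x3 * y3) := by
  have h : |x1 * y1 + x2 * y2 + x3 * y3| ≤ x0 * y0 := by
    apply abs_le_of_sq_le_sq _ (mul_nonneg hx.1 hy.1)
    have h1 : (x1 ^ 2 + x2 ^ 2 + x3 ^ 2) * (y1 ^ 2 + y2 ^ 2 + y3 ^ 2) ≤ x0 ^ 2 * y0 ^ 2 :=
      mul_le_mul hx.2.2.1 hy.2.2.1 (by positivity) (by positivity)
    nlinarith [sq_nonneg (x1 * y2 - x2 * y1), sq_nonneg (x1 * y3 - x3 * y1),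
      sq_nonneg (x2 * y3 - x3 * y2)]
  linarith [(abs_le.1 h).1]

lemma bloch_compl {x0 x1 x2 x3 : ℝ} (hx : BlochOK x0 x1 x2 x3) :
    BlochOK (1 - x0) (-x1) (-x2) (-x3) := by
  obtain ⟨a, b, c, d⟩ := hx
  exact ⟨by linarith, by linarith, by linarith, by nlinarith⟩

lemma bloch_half {x1 x2 x3 : ℝ} (hx : x1 ^ 2 + x2 ^ 2 + x3 ^ 2 = 1 / 4) :
    BlochOK (1 / 2) x1 x2 x3 :=
  ⟨by norm_num, by norm_num, by rw [hx]; norm_num, by rw [hx]; norm_num⟩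

lemma tsirelson (s a1 a2 a3 b1 b2 b3 c1 c2 c3 d1 d2 d3 : ℝ) (hs0 : 0 < s) (hs : s ^ 2 = 2)
    (ha : a1 ^ 2 + a2 ^ 2 + a3 ^ 2 = 1 / 4) (hb : b1 ^ 2 + b2 ^ 2 + b3 ^ 2 = 1 / 4)
    (hc : c1 ^ 2 + c2 ^ 2 + c3 ^ 2 = 1 / 4) (hd : d1 ^ 2 + d2 ^ 2 + d3 ^ 2 = 1 / 4) :
    (a1 * b1 + a2 * b2 + a3 * b3) + (a1 * d1 + a2 * d2 + a3 * d3)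
    + (c1 * b1 + c2 * b2 + c3 * b3) - (c1 * d1 + c2 * d2 + c3 * d3) ≤ s / 2 := by
  have key : 0 ≤ (s * a1 - (b1 + d1)) ^ 2 + (s * a2 - (b2 + d2)) ^ 2 + (s * a3 - (b3 + d3)) ^ 2
    + (s * c1 - (b1 - d1)) ^ 2 + (s * c2 - (b2 - d2)) ^ 2 + (s * c3 - (b3 - d3)) ^ 2 := by
    positivity
  have e : (s * a1 - (b1 + d1)) ^ 2 + (s * a2 - (b2 + d2)) ^ 2 + (s * a3 - (b3 + d3)) ^ 2
    + (s * c1 - (b1 - d1)) ^ 2 + (s * c2 - (b2 - d2)) ^ 2 + (s * c3 - (b3 - d3)) ^ 2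
    = s ^ 2 * ((a1 ^ 2 + a2 ^ 2 + a3 ^ 2) + (c1 ^ 2 + c2 ^ 2 + c3 ^ 2))
      + 2 * ((b1 ^ 2 + b2 ^ 2 + b3 ^ 2) + (d1 ^ 2 + d2 ^ 2 + d3 ^ 2))
      - 2 * s * ((a1 * b1 + a2 * b2 + a3 * b3) + (a1 * d1 + a2 * d2 + a3 * d3)
    + (c1 * b1 + c2 * b2 + c3 * b3) - (c1 * d1 + c2 * d2 + c3 * d3)) := by ring
  rw [e, ha, hb, hc, hd, hs] at key
  nlinarith

lemma bloch_main (τ s a0 a1 a2 a3 b0 b1 b2 b3 c0 c1 c2 c3 d0 d1 d2 d3 : ℝ)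
    (hs0 : 0 < s) (hs : s ^ 2 = 2) (hτ : 1 / 2 + s / 2 ≤ τ)
    (ha : BlochOK a0 a1 a2 a3) (hb : BlochOK b0 b1 b2 b3)
    (hc : BlochOK c0 c1 c2 c3) (hd : BlochOK d0 d1 d2 d3) :
    (a0 * b0 + (a1 * b1 + a2 * b2 + a3 * b3)) + (a0 * d0 + (a1 * d1 + a2 * d2 + a3 * d3))
    + (c0 * b0 + (c1 * b1 + c2 * b2 + c3 * b3)) - (c0 * d0 + (c1 * d1 + c2 * d2 + c3 * d3))
    - τ * a0 - τ * b0 ≤ 0 := by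
  have h1 : 1 ≤ τ := by nlinarith
  -- reduce D
  have D := bloch_ext ((a0 * b0 + (a1 * b1 + a2 * b2 + a3 * b3))
    + (c0 * b0 + (c1 * b1 + c2 * b2 + c3 * b3)) - τ * a0 - τ * b0)
    (a0 - c0) (a1 - c1) (a2 - c2) (a3 - c3) d0 d1 d2 d3 hd ?_ ?_ ?_
  · linarith
  · have := bloch_pos _ _ _ _ _ _ _ _ ha (bloch_compl hb)
    have := bloch_pos _ _ _ _ _ _ _ _ (bloch_compl hc) hb
    nlinarith [ha.1, hb.1]
  · have := bloch_pos _ _ _ _ _ _ _ _ (bloch_compl ha) hb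
    have := bloch_pos _ _ _ _ _ _ _ _ hc (bloch_compl hb)
    nlinarith [ha.1, hb.1]
  clear hd d0 d1 d2 d3
  intro d1 d2 d3 hd'
  have hd := bloch_half hd'
  have C := bloch_ext ((a0 * b0 + (a1 * b1 + a2 * b2 + a3 * b3))
    + (a0 * (1 / 2) + (a1 * d1 + a2 * d2 + a3 * d3)) - τ * a0 - τ * b0)
    (b0 - 1 / 2) (b1 - d1) (b2 - d2) (b3 - d3) c0 c1 c2 c3 hc ?_ ?_ ?_
  · linarith
  · have := bloch_pos _ _ _ _ _ _ _ _ (bloch_compl ha) hb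
    have := bloch_pos _ _ _ _ _ _ _ _ ha (bloch_compl hd)
    nlinarith [ha.1, hb.1]
  · have := bloch_pos _ _ _ _ _ _ _ _ ha (bloch_compl hb)
    have := bloch_pos _ _ _ _ _ _ _ _ (bloch_compl ha) hd
    nlinarith [ha.1, hb.1]
  clear hc c0 c1 c2 c3
  intro c1 c2 c3 hc'
  have hc := bloch_half hc'
  have A := bloch_ext (((1 / 2) * b0 + (c1 * b1 + c2 * b2 + c3 * b3))
    - (1 / 4 + (c1 * d1 + c2 * d2 + c3 * d3)) - τ * b0)
    (b0 + 1 / 2 - τ) (b1 + d1) (b2 + d2) (b3 + d3) a0 a1 a2 a3 ha ?_ ?_ ?_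
  · linarith
  · have := bloch_pos _ _ _ _ _ _ _ _ (bloch_compl hc) hb
    have := bloch_pos _ _ _ _ _ _ _ _ hc hd
    nlinarith [hb.1]
  · have := bloch_pos _ _ _ _ _ _ _ _ hc (bloch_compl hb)
    have := bloch_pos _ _ _ _ _ _ _ _ (bloch_compl hc) (bloch_compl hd)
    nlinarith [hb.1]
  clear ha a0 a1 a2 a3
  intro a1 a2 a3 ha'
  have ha := bloch_half ha'
  have B := bloch_ext (((1 / 4) + (a1 * d1 + a2 * d2 + a3 * d3))
    - (1 / 4 + (c1 * d1 + c2 * d2 + c3 * d3)) - τ * (1 / 2))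
    (1 - τ) (a1 + c1) (a2 + c2) (a3 + c3) b0 b1 b2 b3 hb ?_ ?_ ?_
  · linarith
  · have := bloch_pos _ _ _ _ _ _ _ _ ha (bloch_compl hd)
    have := bloch_pos _ _ _ _ _ _ _ _ hc hd
    nlinarith
  · have := bloch_pos _ _ _ _ _ _ _ _ ha (bloch_compl hd)
    have := bloch_pos _ _ _ _ _ _ _ _ (bloch_compl ha) hd
    have := bloch_pos _ _ _ _ _ _ _ _ hc hd
    nlinarith
  intro b1 b2 b3 hb'
  have := tsirelson s a1 a2 a3 b1 b2 b3 c1 c2 c3 d1 d2 d3 hs0 hs ha' hb' hc' hd'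
  linarith

lemma psd_facts {A : Matrix (Fin 2) (Fin 2) ℂ} (h : A.PosSemidef) :
    0 ≤ (A 0 0).re ∧ (A 0 0).im = 0 ∧ 0 ≤ (A 1 1).re ∧ (A 1 1).im = 0 ∧
    (A 1 0).re = (A 0 1).re ∧ (A 1 0).im = -(A 0 1).im ∧
    (A 0 1).re ^ 2 + (A 0 1).im ^ 2 ≤ (A 0 0).re * (A 1 1).re := by
  have h0 := Complex.le_def.1 (h.diag_nonneg (i := 0))
  have h1 := Complex.le_def.1 (h.diag_nonneg (i := 1))
  have hd := (Complex.le_def.1 h.det_nonneg).1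
  have hh := h.isHermitian.apply 1 0
  have e1 := congrArg Complex.re hh
  have e2 := congrArg Complex.im hh
  simp [Matrix.det_fin_two] at h0 h1 hd e1 e2
  refine ⟨h0.1, h0.2.symm, h1.1, h1.2.symm, e1.symm, by linarith, ?_⟩
  rw [← h0.2, ← e1, show (A 1 0).im = -(A 0 1).im by linarith] at hd
  nlinarith

lemma povm_bloch {A : Matrix (Fin 2) (Fin 2) ℂ} (h : IsPOVMElem A) :
    BlochOK (((A 0 0).re + (A 1 1).re) / 2) (A 0 1).re (A 0 1).im
      (((A 0 0).re - (A 1 1).re) / 2) := by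
  obtain ⟨p1, -, p2, -, -, -, p3⟩ := psd_facts h.1
  obtain ⟨q1, -, q2, -, -, -, q3⟩ := psd_facts h.2
  simp at q1 q2 q3
  exact ⟨by linarith, by linarith, by nlinarith, by nlinarith⟩

lemma bloch_flip {x0 x1 x2 x3 : ℝ} (hx : BlochOK x0 x1 x2 x3) :
    BlochOK x0 x1 (-x2) x3 := by
  simpa [BlochOK] using hx

lemma trace_schmidt (M : Matrix (Fin 2 × Fin 2) (Fin 2 × Fin 2) ℂ) :
    (Matrix.trace (schmidtState (Real.pi / 4) * M)) =
      1 / 2 * (M (0, 0) (0, 0) + M (0, 0) (1, 1) + M (1, 1) (0, 0) + M (1, 1) (1, 1)) := by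
  have hs : ((Real.sqrt 2 : ℝ) : ℂ) ^ 2 = 2 := by
    rw [← Complex.ofReal_pow, Real.sq_sqrt (by norm_num)]; norm_num
  simp [Matrix.trace, Matrix.mul_apply, Fintype.sum_prod_type, schmidtState, schmidtVec,
    Matrix.vecMulVec_apply, Real.cos_pi_div_four, Real.sin_pi_div_four, -Complex.ofReal_cos,
    -Complex.ofReal_sin]
  rw [show (starRingEnd ℂ) 2 = 2 from Complex.conj_ofNat 2]
  linear_combination
    (M (0, 0) (0, 0) + M (0, 0) (1, 1) + M (1, 1) (0, 0) + M (1, 1) (1, 1)) / 4 * hs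

/-- for `τ ≥ 1/2 + 1/√2`, the two-qubit maximally entangled state
`|ψ^{π/4}⟩` does not violate the tilted-CH inequality for any POVM elements. -/
theorem maxEnt_qubit_no_violation
    (τ : ℝ) (hτ : 1 / 2 + 1 / Real.sqrt 2 ≤ τ)
    (A0 A1 B0 B1 : Matrix (Fin 2) (Fin 2) ℂ)
    (hA0 : IsPOVMElem A0) (hA1 : IsPOVMElem A1)
    (hB0 : IsPOVMElem B0) (hB1 : IsPOVMElem B1) :
    tiltedCHBell τ (schmidtState (Real.pi / 4)) A0 A1 B0 B1 ≤ 0 := by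
  have hs0 : 0 < Real.sqrt 2 := by positivity
  have hs : Real.sqrt 2 ^ 2 = 2 := Real.sq_sqrt (by norm_num)
  have hτ' : 1 / 2 + Real.sqrt 2 / 2 ≤ τ := by
    have : 1 / Real.sqrt 2 = Real.sqrt 2 / 2 := by
      field_simp
      linarith
    linarith
  have key := bloch_main τ _ _ _ _ _ _ _ _ _ _ _ _ _ _ _ _ _ hs0 hs hτ' (povm_bloch hA0)
    (bloch_flip (povm_bloch hB0)) (povm_bloch hA1) (bloch_flip (povm_bloch hB1))
  obtain ⟨-, i1, -, i2, i3, i4, -⟩ := psd_facts hA0.1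
  obtain ⟨-, j1, -, j2, j3, j4, -⟩ := psd_facts hA1.1
  obtain ⟨-, k1, -, k2, k3, k4, -⟩ := psd_facts hB0.1
  obtain ⟨-, l1, -, l2, l3, l4, -⟩ := psd_facts hB1.1
  unfold tiltedCHBell
  rw [trace_schmidt, trace_schmidt, trace_schmidt]
  refine le_of_eq_of_le ?_ key
  simp [Matrix.kroneckerMap_apply, i1, i2, i3, i4, j1, j2, j3, j4, k1, k2, k3, k4, l1, l2, l3, l4]
  ring
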